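/- arXiv:1707.07303 — 2 statements merged into one kernel-verified Lean document; each statement's English description precedes it below -/
import Mathlib

section
/- Let S be a matroid polytope subdivision of a matroid polytope Q ⊆ ℝ^{n+1}, let v ∈ ℝ^{n+1} be a fixed nonzero vector, and let F_0 be a face of S. Define the function j on faces of S by j(F) = 1 if face_v(F) ⊇ F_0 and j(F) = 0 otherwise. Then ∑_{F} (−1)^{dim(Q)−dim(F)} j(F), where F ranges over the interior faces of S, equals 1 if F_0 ⊆ face_v(Q), and equals 0 otherwise. -/
open Matroid Set

/-- The Möbius function of a collection of "flats" (finsets), defined recursively: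
`mob flats F G = 0` if `F ⊄ G`, `1` if `F = G`, and `-∑_{F ⊆ G' ⊊ G} mob flats F G'` otherwise,
the sum being over members `G'` of `flats`. -/
noncomputable def mob {α : Type*} [DecidableEq α] (flats : Finset (Finset α)) :
    Finset α → Finset α → ℤ
  | F, G =>
    if F ⊆ G then
      if F = G then 1
      else - ∑ G' ∈ (flats.filter fun G' => F ⊆ G' ∧ G' ⊂ G).attach,
        mob flats F G'.1
    else 0
termination_by F G => G.card
decreasing_by
  exact Finset.card_lt_card (Finset.mem_filter.mp G'.2).2.2

/-- The rank of a set `X` in a matroid `M`: the largest cardinality of an independent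
subset of `X`. -/
noncomputable def rk {α : Type*} (M : Matroid α) (X : Set α) : ℕ :=
  sSup (Set.ncard '' {I | M.Indep I ∧ I ⊆ X})

/-- An element `e` is a loop of `M` if it belongs to the ground set but to no base. -/
def mLoop {α : Type*} (M : Matroid α) (e : α) : Prop :=
  e ∈ M.E ∧ ∀ B, M.IsBase B → e ∉ B

/-- An element `e` is a coloop of `M` if it belongs to every base. -/
def mColoop {α : Type*} (M : Matroid α) (e : α) : Prop :=
  ∀ B, M.IsBase B → e ∈ B

/-- A matroid is loopless if it has no loops. -/
def mLoopless {α : Type*} (M : Matroid α) : Prop := ∀ e, ¬ mLoop M e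

/-- Contraction of a set `C` in a matroid `M`, defined by duality:
`M / C = (M✶ \ C)✶`, where deletion is restriction to the complement. -/
noncomputable def mContr {α : Type*} (M : Matroid α) (C : Set α) : Matroid α :=
  (M✶ ↾ (M✶.E \ C))✶

/-- The minor `M|G/F` of `M` obtained by restricting to `G` and contracting `F`. -/
noncomputable def mMinor {α : Type*} (M : Matroid α) (G F : Set α) : Matroid α :=
  mContr (M ↾ G) F

open Classical in
/-- The finset of all flats of a matroid on `Fin m`, as finsets. -/
noncomputable def flatsF {m : ℕ} (M : Matroid (Fin m)) : Finset (Finset (Fin m)) :=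
  Finset.univ.filter fun F => M.IsFlat ↑F

open Classical in
/-- The beta invariant `β(M) = (-1)^{r(M)} ∑_{F ∈ L(M)} μ(∅,F) r(F)` of a loopless
matroid `M`; it is `0` if `M` has a loop. -/
noncomputable def betaInv {m : ℕ} (M : Matroid (Fin m)) : ℤ :=
  if mLoopless M then
    (-1) ^ (rk M M.E) * ∑ F ∈ flatsF M, mob (flatsF M) ∅ F * (rk M ↑F : ℤ)
  else 0

/-- The 0/1 indicator vector of a finset `S ⊆ {0,…,m-1}`, as a vector in `ℝ^m`. -/
def eVec {m : ℕ} (S : Finset (Fin m)) : Fin m → ℝ := fun i => if i ∈ S then 1 else 0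

/-- The dot product of two vectors in `ℝ^m`. -/
def dotp {m : ℕ} (v x : Fin m → ℝ) : ℝ := ∑ i, x i * v i

/-- The face of a set `Q ⊆ ℝ^m` maximizing the dot product with `v`. -/
def faceV {m : ℕ} (v : Fin m → ℝ) (Q : Set (Fin m → ℝ)) : Set (Fin m → ℝ) :=
  {x ∈ Q | ∀ y ∈ Q, dotp v y ≤ dotp v x}

/-- The matroid polytope `Q(M)` of a matroid `M` on `{0,…,m-1}`: the convex hull of the
indicator vectors of the bases of `M`. -/
noncomputable def mPoly {m : ℕ} (M : Matroid (Fin m)) : Set (Fin m → ℝ) :=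
  convexHull ℝ {x | ∃ B : Finset (Fin m), M.IsBase ↑B ∧ x = eVec B}

/-- A polytope in `ℝ^m`: the convex hull of a finite set of points. -/
def IsPolytope {m : ℕ} (P : Set (Fin m → ℝ)) : Prop :=
  ∃ V : Finset (Fin m → ℝ), P = convexHull ℝ ↑V

/-- `F` is a face of `Q ⊆ ℝ^m` if it is the maximizing set of some linear functional
`x ↦ x·v` on `Q`.  (Taking `v = 0` shows `Q` is a face of itself.) -/
def IsFaceOf {m : ℕ} (Q F : Set (Fin m → ℝ)) : Prop := ∃ v, F = faceV v Q

/-- The dimension of a subset of `ℝ^m`: the dimension of its affine hull. -/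
noncomputable def pdim {m : ℕ} (P : Set (Fin m → ℝ)) : ℕ :=
  Module.finrank ℝ (vectorSpan ℝ P)

/-- `S` is a subdivision of the polytope `Q`: a finite collection of polytopes of the same
dimension as `Q` whose vertices are vertices of `Q`, whose union is `Q`, and in which any
two distinct cells meet (if at all) in a proper face of both. -/
structure IsSubdivision {m : ℕ} (S : Finset (Set (Fin m → ℝ))) (Q : Set (Fin m → ℝ)) :
    Prop where
  poly : ∀ P ∈ S, IsPolytope P
  dim_eq : ∀ P ∈ S, pdim P = pdim Q
  vertices_subset : ∀ P ∈ S, Set.extremePoints ℝ P ⊆ Set.extremePoints ℝ Q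
  cover : ⋃₀ ↑S = Q
  inter_face : ∀ P ∈ S, ∀ P' ∈ S, P ≠ P' → (P ∩ P').Nonempty →
    IsFaceOf P (P ∩ P') ∧ P ∩ P' ≠ P ∧ IsFaceOf P' (P ∩ P') ∧ P ∩ P' ≠ P'

/-- A face of a subdivision `S` is a face of one of its cells. -/
def IsFaceOfSubdivision {m : ℕ} (S : Finset (Set (Fin m → ℝ))) (F : Set (Fin m → ℝ)) :
    Prop := ∃ P ∈ S, IsFaceOf P F

/-- An interior face of a subdivision `S` of `Q` is a face of `S` that is not contained in
the relative boundary of `Q`. -/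
def IsInteriorFace {m : ℕ} (S : Finset (Set (Fin m → ℝ))) (Q F : Set (Fin m → ℝ)) : Prop :=
  IsFaceOfSubdivision S F ∧ ¬ F ⊆ intrinsicFrontier ℝ Q

/-- A matroid polytope subdivision: a subdivision all of whose cells are matroid
polytopes. -/
def IsMatroidSubdivision {m : ℕ} (S : Finset (Set (Fin m → ℝ))) (Q : Set (Fin m → ℝ)) :
    Prop :=
  IsSubdivision S Q ∧ ∀ P ∈ S, ∃ M' : Matroid (Fin m), P = mPoly M'

section RelativeInterior

variable {E : Type*} [NormedAddCommGroup E] [NormedSpace ℝ E]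

/-- The relative interior of a set is relatively open in its affine span. -/
lemma exists_isOpen_intrinsicInterior_eq (K : Set E) :
    ∃ O : Set E, IsOpen O ∧ intrinsicInterior ℝ K = (affineSpan ℝ K : Set E) ∩ O := by
  obtain ⟨O, hO, hOK⟩ := isOpen_induced_iff.1
    (isOpen_interior (s := ((↑) ⁻¹' K : Set (affineSpan ℝ K))))
  refine ⟨O, hO, ?_⟩
  rw [intrinsicInterior, ← hOK]
  exact Subtype.image_preimage_coe _ _

lemma mem_intrinsicInterior_of_isOpen {K O : Set E} {z : E} (hz : z ∈ affineSpan ℝ K)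
    (hO : IsOpen O) (hzO : z ∈ O) (hOK : (affineSpan ℝ K : Set E) ∩ O ⊆ K) :
    z ∈ intrinsicInterior ℝ K := by
  refine mem_intrinsicInterior.2 ⟨⟨z, hz⟩, ?_, rfl⟩
  refine mem_interior.2 ⟨((↑) : affineSpan ℝ K → E) ⁻¹' O, fun y hy => hOK ⟨y.2, hy⟩,
    hO.preimage continuous_subtype_val, hzO⟩

/-- Points of the half-open segment from a relative interior point `z` of a convex set to another
point `w` of the set are relative interior points. -/
lemma Convex.add_smul_sub_mem_intrinsicInterior {K : Set E} (hK : Convex ℝ K) {z w : E}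
    (hz : z ∈ intrinsicInterior ℝ K) (hw : w ∈ K) {s : ℝ} (hs : 0 < s) (hs1 : s ≤ 1) :
    w + s • (z - w) ∈ intrinsicInterior ℝ K := by
  obtain ⟨O, hO, hOK⟩ := exists_isOpen_intrinsicInterior_eq K
  have hzO : z ∈ (affineSpan ℝ K : Set E) ∩ O := hOK ▸ hz
  have hwA : w ∈ affineSpan ℝ K := subset_affineSpan ℝ K hw
  have hmem : ∀ (c : ℝ) (x : E), x ∈ affineSpan ℝ K → w + c • (x - w) ∈ affineSpan ℝ K := by
    intro c x hx
    have := AffineMap.lineMap_mem (Q := affineSpan ℝ K) c hwA hx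
    rwa [AffineMap.lineMap_apply, vsub_eq_sub, vadd_eq_add, add_comm] at this
  have hcont : Continuous fun x : E => w + s⁻¹ • (x - w) := by fun_prop
  refine mem_intrinsicInterior_of_isOpen (hmem s z hzO.1) (hO.preimage hcont) ?_ ?_
  · simpa [smul_smul, inv_mul_cancel₀ hs.ne'] using hzO.2
  · rintro x ⟨hxA, hxO⟩
    have hyK : w + s⁻¹ • (x - w) ∈ K :=
      intrinsicInterior_subset (hOK ▸ ⟨hmem _ x hxA, hxO⟩ : _ ∈ intrinsicInterior ℝ K)
    have := hK.add_smul_sub_mem hw hyK ⟨hs.le, hs1⟩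
    simpa [smul_smul, mul_inv_cancel₀ hs.ne'] using this

protected lemma Convex.intrinsicInterior {K : Set E} (hK : Convex ℝ K) :
    Convex ℝ (intrinsicInterior ℝ K) := by
  intro z hz w hw a b ha hb hab
  rcases ha.eq_or_lt with rfl | ha
  · simpa [show b = 1 by linarith] using hw
  · have := hK.add_smul_sub_mem_intrinsicInterior hz (intrinsicInterior_subset hw) ha
      (by linarith)
    convert this using 1
    rw [show b = 1 - a by linarith]
    module

/-- A segment ending in a relative interior point can be prolonged inside the set. -/
lemma exists_add_smul_sub_mem_of_mem_intrinsicInterior {K : Set E} {z w : E}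
    (hz : z ∈ intrinsicInterior ℝ K) (hw : w ∈ K) : ∃ t : ℝ, 0 < t ∧ z + t • (z - w) ∈ K := by
  obtain ⟨O, hO, hOK⟩ := exists_isOpen_intrinsicInterior_eq K
  have hzO : z ∈ (affineSpan ℝ K : Set E) ∩ O := hOK ▸ hz
  have hcont : Continuous fun t : ℝ => z + t • (z - w) := by fun_prop
  have hev : ∀ᶠ t in nhdsWithin (0 : ℝ) (Ioi 0), z + t • (z - w) ∈ O :=
    nhdsWithin_le_nhds ((hO.preimage hcont).mem_nhds (by simpa using hzO.2))
  obtain ⟨t, htO, ht⟩ := (hev.and self_mem_nhdsWithin).exists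
  refine ⟨t, ht, intrinsicInterior_subset (𝕜 := ℝ) ?_⟩
  rw [hOK]
  refine ⟨?_, htO⟩
  have := (affineSpan ℝ K).smul_vsub_vadd_mem t hzO.1 (subset_affineSpan ℝ K hw) hzO.1
  rwa [vsub_eq_sub, vadd_eq_add, add_comm] at this

lemma mem_openSegment_add_smul_sub {z w : E} {t : ℝ} (ht : 0 < t) :
    z ∈ openSegment ℝ w (z + t • (z - w)) := by
  have h1 : (0 : ℝ) < 1 + t := by linarith
  refine ⟨t / (1 + t), 1 / (1 + t), by positivity, by positivity, by field_simp; ring, ?_⟩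
  match_scalars <;> field_simp
  ring

/-- An extreme subset containing a relative interior point of `F` contains `F`. -/
lemma IsExtreme.subset_of_mem_intrinsicInterior {G X F : Set E} (hX : IsExtreme ℝ G X)
    (hF : F ⊆ G) {y : E} (hy : y ∈ intrinsicInterior ℝ F) (hyX : y ∈ X) : F ⊆ X := by
  intro w hw
  obtain ⟨t, ht, htF⟩ := exists_add_smul_sub_mem_of_mem_intrinsicInterior hy hw
  exact hX.left_mem_of_mem_openSegment (hF hw) (hF htF) hyX (mem_openSegment_add_smul_sub ht)

/-- If `F ⊆ K` meets the relative interior of `K`, then the relative interior of `F` is contained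
in that of `K`. -/
lemma Convex.intrinsicInterior_subset_of_mem {K F : Set E} (hK : Convex ℝ K) (hF : F ⊆ K) {z : E}
    (hzF : z ∈ F) (hz : z ∈ intrinsicInterior ℝ K) :
    intrinsicInterior ℝ F ⊆ intrinsicInterior ℝ K := by
  intro y hy
  obtain ⟨t, ht, htF⟩ := exists_add_smul_sub_mem_of_mem_intrinsicInterior hy hzF
  have h1 : (0 : ℝ) < 1 + t := by linarith
  have := hK.add_smul_sub_mem_intrinsicInterior hz (hF htF) (s := t / (1 + t)) (by positivity)
    (by rw [div_le_one h1]; linarith)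
  convert this using 1
  match_scalars <;> field_simp <;> ring

/-- A point of a convex set outside its relative interior has a supporting functional that is not
constant on the set. -/
lemma Convex.exists_supporting_of_notMem_intrinsicInterior [FiniteDimensional ℝ E] {K : Set E}
    (hK : Convex ℝ K) {y : E} (hyK : y ∈ K) (hy : y ∉ intrinsicInterior ℝ K) :
    ∃ f : StrongDual ℝ E, (∀ z ∈ K, f z ≤ f y) ∧ ∃ z ∈ K, f z < f y := by
  obtain ⟨z₀, hz₀⟩ := Set.Nonempty.intrinsicInterior hK ⟨y, hyK⟩
  obtain ⟨O, hO, hOK⟩ := exists_isOpen_intrinsicInterior_eq K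
  have hz₀O : z₀ ∈ (affineSpan ℝ K : Set E) ∩ O := hOK ▸ hz₀
  have hyA : y ∈ affineSpan ℝ K := subset_affineSpan ℝ K hyK
  obtain ⟨p, hp⟩ := (affineSpan ℝ K).direction.exists_isCompl
  let π : E →ₗ[ℝ] E := (affineSpan ℝ K).direction.subtype ∘ₗ
    Submodule.projectionOnto (affineSpan ℝ K).direction p hp
  have hπcont : Continuous π := π.continuous_of_finiteDimensional
  have hπid : ∀ x ∈ affineSpan ℝ K, π (x - y) = x - y := by
    intro x hx
    have : x - y ∈ (affineSpan ℝ K).direction := AffineSubspace.vsub_mem_direction hx hyA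
    exact congrArg Subtype.val (Submodule.projectionOnto_apply_left hp ⟨x - y, this⟩)
  have hπA : ∀ x, y + π x ∈ affineSpan ℝ K := by
    intro x
    have := AffineSubspace.vadd_mem_of_mem_direction (Subtype.prop
      (Submodule.projectionOnto (affineSpan ℝ K).direction p hp x)) hyA
    rwa [vadd_eq_add, add_comm] at this
  let K' : Set E := {x | y + π x ∈ K}
  have hK' : Convex ℝ K' := by
    intro a ha b hb s t hs ht hst
    have := hK ha hb hs ht hst
    change y + π (s • a + t • b) ∈ K
    convert this using 1
    rw [map_add, map_smul, map_smul]
    nth_rewrite 1 [← one_smul ℝ y, ← hst]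
    module
  have hcont : Continuous fun x => y + π x := by fun_prop
  have mem_int : ∀ x, y + π x ∈ intrinsicInterior ℝ K → x ∈ interior K' := by
    intro x hx
    refine mem_interior.2 ⟨(fun x => y + π x) ⁻¹' O, ?_, hO.preimage hcont, ?_⟩
    · intro w hw
      have : y + π w ∈ intrinsicInterior ℝ K := hOK ▸ ⟨hπA w, hw⟩
      exact intrinsicInterior_subset (s := K) this
    · rw [hOK] at hx
      exact hx.2
  have hmemK' : ∀ z ∈ K, z - y ∈ K' := by
    intro z hz
    change y + π (z - y) ∈ K
    rw [hπid z (subset_affineSpan ℝ K hz)]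
    simpa using hz
  have hz₀' : z₀ - y ∈ interior K' := by
    apply mem_int
    rw [hπid z₀ hz₀O.1]
    simpa using hz₀
  have h0 : (0 : E) ∉ interior K' := by
    intro h0
    apply hy
    obtain ⟨O', hO'K, hO', h0O'⟩ := mem_interior.1 h0
    have hc : Continuous fun x : E => x - y := by fun_prop
    refine mem_intrinsicInterior_of_isOpen hyA (hO'.preimage hc) (by simpa using h0O') ?_
    rintro x ⟨hxA, hxO⟩
    have : y + π (x - y) ∈ K := hO'K hxO
    rw [hπid x hxA] at this
    simpa using this
  obtain ⟨f, hf⟩ := geometric_hahn_banach_open_point hK'.interior isOpen_interior h0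
  refine ⟨f, fun z hz => ?_, z₀, intrinsicInterior_subset hz₀, ?_⟩
  · have hzc : z - y ∈ closure (interior K') := by
      rw [hK'.closure_interior_eq_closure_of_nonempty_interior ⟨_, hz₀'⟩]
      exact subset_closure (hmemK' z hz)
    have : f (z - y) ≤ f 0 := closure_minimal (fun a ha => (hf a ha).le)
      (isClosed_le f.continuous continuous_const) hzc
    simpa using this
  · simpa using hf _ hz₀'

end RelativeInterior

section EulerCharacteristic

lemma exists_eq_Ioo_of_isOpen {J : Set ℝ} (hJ : IsOpen J) (hconv : Convex ℝ J)
    (hb : Bornology.IsBounded J) (hne : J.Nonempty) : ∃ l r, l < r ∧ J = Ioo l r := by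
  have hI : J = Ioo (sInf J) (sSup J) := by
    apply Subset.antisymm
    · intro x hx
      obtain ⟨a, b, hxab, hab⟩ := mem_nhds_iff_exists_Ioo_subset.1 (hJ.mem_nhds hx)
      constructor
      · have := csInf_le hb.bddBelow (hab ⟨by linarith [hxab.1], by linarith [hxab.1, hxab.2]⟩ :
          (a + x) / 2 ∈ J)
        linarith [hxab.1]
      · have := le_csSup hb.bddAbove (hab ⟨by linarith [hxab.1, hxab.2], by linarith [hxab.2]⟩ :
          (x + b) / 2 ∈ J)
        linarith [hxab.2]
    · exact IsConnected.Ioo_csInf_csSup_subset ⟨hne, hconv.isPreconnected⟩ hb.bddBelow hb.bddAbove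
  refine ⟨_, _, ?_, hI⟩
  obtain ⟨x, hx⟩ := hne
  rw [hI] at hx
  exact hx.1.trans hx.2

open Classical in
/-- The one-dimensional Euler relation: in a linear relation between indicator functions of points
(sign `1`) and bounded open intervals (sign `-1`), the signed coefficients sum to zero. -/
lemma sum_eq_zero_of_sum_indicator_intervals {ι : Type*} (s : Finset ι) (J : ι → Set ℝ)
    (σ b : ι → ℤ)
    (hJ : ∀ i ∈ s, (σ i = 1 ∧ ∃ c, J i = {c}) ∨ (σ i = -1 ∧ ∃ l r, l < r ∧ J i = Ioo l r))
    (hsum : ∀ t, ∑ i ∈ s, b i * (σ i * if t ∈ J i then 1 else 0) = 0) :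
    ∑ i ∈ s, b i = 0 := by
  have hjump : ∀ i ∈ s, ∃ l : ℝ, ∀ t, ∀ᶠ u in nhdsWithin t (Ioi t),
      σ i * (if t ∈ J i then 1 else 0) - σ i * (if u ∈ J i then 1 else 0)
        = if l = t then 1 else 0 := by
    intro i hi
    rcases hJ i hi with ⟨hσ, c, hc⟩ | ⟨hσ, l, r, hlr, hlJ⟩
    · refine ⟨c, fun t => ?_⟩
      have h1 : ∀ᶠ u in nhdsWithin t (Ioi t), u ≠ c := by
        rcases lt_or_ge t c with h | h
        · filter_upwards [Ioo_mem_nhdsGT h] with u hu using hu.2.ne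
        · filter_upwards [self_mem_nhdsWithin] with u hu
          exact (lt_of_le_of_lt h hu).ne'
      filter_upwards [h1] with u hu
      simp [hσ, hc, hu, eq_comm]
    · refine ⟨l, fun t => ?_⟩
      rw [hσ, hlJ]
      rcases lt_trichotomy t l with h | h | h
      · filter_upwards [Ioo_mem_nhdsGT h] with u hu
        simp [h.le.not_gt, hu.2.le.not_gt, h.ne']
      · subst h
        filter_upwards [Ioo_mem_nhdsGT hlr] with u hu
        simp [hu.1, hu.2]
      · rcases lt_or_ge t r with h' | h'
        · filter_upwards [Ioo_mem_nhdsGT h'] with u hu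
          simp [h, h', hu.2, h.trans hu.1, h.ne]
        · filter_upwards [self_mem_nhdsWithin] with u hu
          simp [h'.not_gt, (h'.trans (le_of_lt hu)).not_gt, h.ne]
  choose! l hl using hjump
  have hfib : ∀ t, ∑ i ∈ s with l i = t, b i = 0 := by
    intro t
    have hev : ∀ᶠ u in nhdsWithin t (Ioi t), ∀ i ∈ s,
        σ i * (if t ∈ J i then 1 else 0) - σ i * (if u ∈ J i then 1 else 0)
          = if l i = t then 1 else 0 :=
      (Filter.eventually_all_finset s).2 fun i hi => hl i hi t
    obtain ⟨u, hu⟩ := hev.exists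
    rw [Finset.sum_filter]
    calc ∑ i ∈ s, (if l i = t then b i else 0)
        = ∑ i ∈ s, (b i * (σ i * (if t ∈ J i then 1 else 0))
            - b i * (σ i * (if u ∈ J i then 1 else 0))) := by
          refine Finset.sum_congr rfl fun i hi => ?_
          rw [← mul_sub, hu i hi]
          simp
      _ = 0 := by rw [Finset.sum_sub_distrib, hsum, hsum, sub_zero]
  rw [← Finset.sum_fiberwise_of_maps_to (t := s.image l) (g := l)
    fun i hi => Finset.mem_image_of_mem l hi]
  exact Finset.sum_eq_zero fun t _ => hfib t

/-- `U` is a bounded convex set that is relatively open in the affine subspace `A`. -/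
structure IsRelOpenConvex {E : Type*} [NormedAddCommGroup E] [NormedSpace ℝ E]
    (A : AffineSubspace ℝ E) (U : Set E) : Prop where
  convex : Convex ℝ U
  isBounded : Bornology.IsBounded U
  exists_isOpen : ∃ O, IsOpen O ∧ U = (A : Set E) ∩ O

lemma IsRelOpenConvex.subset {E : Type*} [NormedAddCommGroup E] [NormedSpace ℝ E]
    {A : AffineSubspace ℝ E} {U : Set E} (hU : IsRelOpenConvex A U) : U ⊆ A := by
  obtain ⟨O, -, rfl⟩ := hU.exists_isOpen
  exact inter_subset_left

/-- The hyperplane `x k = t`. -/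
def coordHyperplane {m : ℕ} (k : Fin m) (t : ℝ) : AffineSubspace ℝ (Fin m → ℝ) where
  carrier := {x | x k = t}
  smul_vsub_vadd_mem' := by
    intro c x y z hx hy hz
    simp only [mem_ofPred_eq] at hx hy hz
    simp [hx, hy, hz]

lemma mem_coordHyperplane {m : ℕ} {k : Fin m} {t : ℝ} {x : Fin m → ℝ} :
    x ∈ coordHyperplane k t ↔ x k = t := Iff.rfl

lemma direction_coordHyperplane {m : ℕ} (k : Fin m) (t : ℝ) :
    (coordHyperplane k t).direction = LinearMap.ker (LinearMap.proj (R := ℝ) k) := by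
  have hp : (fun _ => t : Fin m → ℝ) ∈ coordHyperplane k t := mem_coordHyperplane.2 rfl
  ext d
  rw [← AffineSubspace.vadd_mem_iff_mem_direction d hp, mem_coordHyperplane]
  simp

lemma IsRelOpenConvex.inter_coordHyperplane {m : ℕ} {A : AffineSubspace ℝ (Fin m → ℝ)}
    {U : Set (Fin m → ℝ)} (hU : IsRelOpenConvex A U) (k : Fin m) (t : ℝ) :
    IsRelOpenConvex (A ⊓ coordHyperplane k t) (U ∩ coordHyperplane k t) := by
  refine ⟨hU.convex.inter (AffineSubspace.convex _), hU.isBounded.subset inter_subset_left, ?_⟩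
  obtain ⟨O, hO, rfl⟩ := hU.exists_isOpen
  exact ⟨O, hO, inter_right_comm _ _ _⟩

/-- The sign by which slicing a relatively open convex set `U` of `A` at `x k = t` changes
`(-1) ^ dim A`, and the shape of the projection of `U` to the `k`-th coordinate. -/
lemma IsRelOpenConvex.exists_sign {m : ℕ} {A : AffineSubspace ℝ (Fin m → ℝ)}
    {U : Set (Fin m → ℝ)} (hU : IsRelOpenConvex A U) (hne : U.Nonempty) (k : Fin m) :
    ∃ σ : ℤ, (∀ t, (U ∩ coordHyperplane k t).Nonempty →
        (-1 : ℤ) ^ Module.finrank ℝ (A ⊓ coordHyperplane k t).direction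
          = (-1) ^ Module.finrank ℝ A.direction * σ) ∧
      ((σ = 1 ∧ ∃ c, (fun x : Fin m → ℝ => x k) '' U = {c}) ∨
        (σ = -1 ∧ ∃ l r, l < r ∧ (fun x : Fin m → ℝ => x k) '' U = Ioo l r)) := by
  have hdir : ∀ t, (U ∩ coordHyperplane k t).Nonempty → (A ⊓ coordHyperplane k t).direction
      = A.direction ⊓ LinearMap.ker (LinearMap.proj (R := ℝ) k) := by
    rintro t ⟨x, hxU, hxt⟩
    rw [AffineSubspace.direction_inf_of_mem (hU.subset hxU) hxt, direction_coordHyperplane]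
  by_cases hconst : A.direction ≤ LinearMap.ker (LinearMap.proj (R := ℝ) (φ := fun _ => ℝ) k)
  · refine ⟨1, fun t ht => by rw [hdir t ht, inf_eq_left.2 hconst, mul_one], Or.inl ⟨rfl, ?_⟩⟩
    obtain ⟨x, hx⟩ := hne
    refine ⟨x k, Subset.antisymm ?_ (singleton_subset_iff.2 (mem_image_of_mem _ hx))⟩
    rintro _ ⟨y, hy, rfl⟩
    have : y - x ∈ A.direction := AffineSubspace.vsub_mem_direction (hU.subset hy) (hU.subset hx)
    have := hconst this
    simpa [sub_eq_zero] using this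
  · refine ⟨-1, fun t ht => ?_, Or.inr ⟨rfl, ?_⟩⟩
    · let f : Module.Dual ℝ A.direction :=
        (LinearMap.proj (R := ℝ) (φ := fun _ => ℝ) k) ∘ₗ A.direction.subtype
      have hf : f ≠ 0 := by
        intro hf
        exact hconst fun d hd => LinearMap.congr_fun hf ⟨d, hd⟩
      have hker : (A ⊓ coordHyperplane k t).direction
          = (LinearMap.ker f).map A.direction.subtype := by
        rw [hdir t ht, LinearMap.ker_comp, Submodule.map_comap_subtype]
      have := Module.Dual.finrank_ker_add_one_of_ne_zero hf
      rw [hker, Submodule.finrank_map_subtype_eq, ← this, pow_succ]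
      ring
    · obtain ⟨d, hd, hdk⟩ := SetLike.not_le_iff_exists.1 hconst
      have hdk' : d k ≠ 0 := hdk
      obtain ⟨O, hO, hUO⟩ := hU.exists_isOpen
      refine exists_eq_Ioo_of_isOpen ?_ ?_ ?_ (hne.image _)
      · refine isOpen_iff_mem_nhds.2 ?_
        rintro _ ⟨x, hx, rfl⟩
        have hx' : x ∈ (A : Set _) ∩ O := hUO ▸ hx
        have hcont : Continuous fun u : ℝ => x + ((u - x k) / d k) • d := by fun_prop
        have hev : ∀ᶠ u in nhds (x k), x + ((u - x k) / d k) • d ∈ O :=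
          (hO.preimage hcont).mem_nhds (by simpa using hx'.2)
        filter_upwards [hev] with u hu
        refine ⟨x + ((u - x k) / d k) • d, hUO.symm.subset ⟨?_, hu⟩, ?_⟩
        · have := AffineSubspace.vadd_mem_of_mem_direction
            (A.direction.smul_mem ((u - x k) / d k) hd) hx'.1
          rwa [vadd_eq_add, add_comm] at this
        · simp [hdk']
      · exact hU.convex.linear_image (LinearMap.proj (R := ℝ) (φ := fun _ => ℝ) k)
      · exact (LipschitzWith.eval k).isBounded_image hU.isBounded

open Classical in
lemma sum_neg_one_pow_eq_zero_of_le {m : ℕ} {ι : Type*} (k : ℕ) (hk : k ≤ m) (s : Finset ι)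
    (a : ι → ℤ) : ∀ (y : Fin m → ℝ) (A : ι → AffineSubspace ℝ (Fin m → ℝ))
    (U : ι → Set (Fin m → ℝ)), (∀ i ∈ s, IsRelOpenConvex (A i) (U i)) →
    (∀ i ∈ s, ∀ x ∈ A i, ∀ j : Fin m, k ≤ j → x j = y j) →
    (∀ x, ∑ i ∈ s, (if x ∈ U i then a i else 0) = 0) →
    ∑ i ∈ s, (if (U i).Nonempty then a i * (-1) ^ Module.finrank ℝ (A i).direction else 0)
      = 0 := by
  induction k with
  | zero =>
    intro y A U hU hA hsum
    refine Eq.trans ?_ (hsum y)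
    refine Finset.sum_congr rfl fun i hi => ?_
    have hy : ∀ x ∈ A i, x = y := fun x hx => funext fun j => hA i hi x hx j (Nat.zero_le _)
    have hne : (U i).Nonempty ↔ y ∈ U i :=
      ⟨fun ⟨x, hx⟩ => hy x ((hU i hi).subset hx) ▸ hx, fun h => ⟨y, h⟩⟩
    by_cases h : y ∈ U i
    · have hdir : (A i).direction = ⊥ := by
        rw [eq_bot_iff]
        intro d hd
        have hyA := (hU i hi).subset h
        have := hy _ (AffineSubspace.vadd_mem_of_mem_direction hd hyA)
        simpa using this
      rw [if_pos (hne.2 h), if_pos h, hdir, finrank_bot, pow_zero, mul_one]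
    · rw [if_neg (hne.not.2 h), if_neg h]
  | succ k ih =>
    intro y A U hU hA hsum
    let κ : Fin m := ⟨k, hk⟩
    have hslice : ∀ t, ∑ i ∈ s, (if (U i ∩ coordHyperplane κ t).Nonempty then
        a i * (-1) ^ Module.finrank ℝ (A i ⊓ coordHyperplane κ t).direction else 0) = 0 := by
      intro t
      refine ih (by omega) (Function.update y κ t) (fun i => A i ⊓ coordHyperplane κ t)
        (fun i => U i ∩ coordHyperplane κ t)
        (fun i hi => (hU i hi).inter_coordHyperplane κ t) ?_ ?_
      · intro i hi x hx j hj
        by_cases hjk : j = κ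
        · subst hjk
          simpa using mem_coordHyperplane.1 hx.2
        · rw [Function.update_of_ne hjk]
          refine hA i hi x hx.1 j ?_
          have : (j : ℕ) ≠ k := fun h => hjk (Fin.ext h)
          omega
      · intro x
        by_cases hx : x ∈ (coordHyperplane κ t : Set (Fin m → ℝ))
        · simpa [hx] using hsum x
        · simp only [mem_inter_iff, hx, and_false, if_false, Finset.sum_const_zero]
    have hsign : ∀ i ∈ s, (U i).Nonempty → _ := fun i hi hne => (hU i hi).exists_sign hne κ
    choose! σ hσ hJ using hsign
    rw [← Finset.sum_filter]
    refine sum_eq_zero_of_sum_indicator_intervals _ (fun i => (fun x : Fin m → ℝ => x κ) '' U i)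
      σ _ (fun i hi => ?_) (fun t => ?_)
    · obtain ⟨his, hne⟩ := Finset.mem_filter.1 hi
      exact hJ i his hne
    · rw [Finset.sum_filter]
      refine Eq.trans ?_ (hslice t)
      refine Finset.sum_congr rfl fun i hi => ?_
      have hiff : t ∈ (fun x : Fin m → ℝ => x κ) '' U i ↔
          (U i ∩ coordHyperplane κ t).Nonempty := Iff.rfl
      by_cases h : (U i ∩ coordHyperplane κ t).Nonempty
      · have hne : (U i).Nonempty := h.mono inter_subset_left
        rw [if_pos hne, if_pos (hiff.2 h), if_pos h, hσ i hi hne t h]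
        ring
      · rw [if_neg (hiff.not.2 h), if_neg h, mul_zero, mul_zero, ite_self]

open Classical in
/-- Additivity of the Euler characteristic: if a bounded relatively open convex set `V` is a
disjoint union of finitely many such sets `U i`, the signs `(-1) ^ dim` of the nonempty `U i` sum
to that of `V`. -/
lemma sum_neg_one_pow_eq_of_partition {m : ℕ} {ι : Type*} (s : Finset ι)
    (A : ι → AffineSubspace ℝ (Fin m → ℝ)) (U : ι → Set (Fin m → ℝ))
    (hU : ∀ i ∈ s, IsRelOpenConvex (A i) (U i)) {B : AffineSubspace ℝ (Fin m → ℝ)}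
    {V : Set (Fin m → ℝ)} (hV : IsRelOpenConvex B V)
    (hsum : ∀ x, ∑ i ∈ s, (if x ∈ U i then 1 else 0) = if x ∈ V then (1 : ℤ) else 0) :
    ∑ i ∈ s, (if (U i).Nonempty then (-1 : ℤ) ^ Module.finrank ℝ (A i).direction else 0)
      = if V.Nonempty then (-1) ^ Module.finrank ℝ B.direction else 0 := by
  have := sum_neg_one_pow_eq_zero_of_le m le_rfl (Finset.insertNone s)
    (fun o => o.elim (-1) fun _ => 1) 0 (fun o => o.elim B A) (fun o => o.elim V U)
    (fun o ho => ?_) (fun o _ x _ j hj => absurd j.2 (not_lt.2 hj)) (fun x => ?_)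
  · rw [Finset.sum_insertNone] at this
    change (if V.Nonempty then (-1) * (-1 : ℤ) ^ Module.finrank ℝ B.direction else 0)
      + ∑ i ∈ s, (if (U i).Nonempty then
        1 * (-1 : ℤ) ^ Module.finrank ℝ (A i).direction else 0) = 0 at this
    simp only [one_mul] at this
    by_cases hVne : V.Nonempty
    · rw [if_pos hVne] at this ⊢
      linarith
    · rw [if_neg hVne] at this ⊢
      linarith
  · cases o with
    | none => exact hV
    | some i => exact hU i (Finset.some_mem_insertNone.1 ho)
  · rw [Finset.sum_insertNone]
    have := hsum x
    change (if x ∈ V then (-1 : ℤ) else 0) + ∑ i ∈ s, (if x ∈ U i then 1 else 0) = 0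
    by_cases hx : x ∈ V
    · rw [if_pos hx] at this ⊢
      rw [this]
      rfl
    · rw [if_neg hx] at this ⊢
      rw [this]
      rfl

end EulerCharacteristic

section Faces

variable {m : ℕ}

/-- The dot product with `v` as a continuous linear functional. -/
noncomputable def dotDual (v : Fin m → ℝ) : StrongDual ℝ (Fin m → ℝ) :=
  LinearMap.toContinuousLinearMap
    { toFun := dotp v
      map_add' := fun x y => by simp [dotp, add_mul, Finset.sum_add_distrib]
      map_smul' := fun c x => by simp [dotp, mul_assoc, Finset.mul_sum] }

lemma dotp_add_left (v w x : Fin m → ℝ) : dotp (v + w) x = dotp v x + dotp w x := by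
  simp [dotp, mul_add, Finset.sum_add_distrib]

lemma dotp_smul_left (c : ℝ) (v x : Fin m → ℝ) : dotp (c • v) x = c * dotp v x := by
  simp [dotp, mul_left_comm, Finset.mul_sum]

lemma exists_dotp_eq (f : StrongDual ℝ (Fin m → ℝ)) : ∃ u, ∀ x, f x = dotp u x :=
  ⟨fun i => f fun j => if i = j then 1 else 0, fun x =>
    LinearMap.pi_apply_eq_sum_univ (f : (Fin m → ℝ) →ₗ[ℝ] ℝ) x⟩

lemma isExposed_faceV (v : Fin m → ℝ) (Q : Set (Fin m → ℝ)) : IsExposed ℝ Q (faceV v Q) :=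
  fun _ => ⟨dotDual v, rfl⟩

lemma IsFaceOf.isExposed {Q F : Set (Fin m → ℝ)} (h : IsFaceOf Q F) : IsExposed ℝ Q F := by
  obtain ⟨v, rfl⟩ := h
  exact isExposed_faceV v Q

lemma IsFaceOf.subset {Q F : Set (Fin m → ℝ)} (h : IsFaceOf Q F) : F ⊆ Q :=
  h.isExposed.subset

lemma IsPolytope.isCompact {P : Set (Fin m → ℝ)} (hP : IsPolytope P) : IsCompact P := by
  obtain ⟨V, rfl⟩ := hP
  exact V.finite_toSet.isCompact_convexHull ℝ

lemma IsPolytope.convex {P : Set (Fin m → ℝ)} (hP : IsPolytope P) : Convex ℝ P := by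
  obtain ⟨V, rfl⟩ := hP
  exact convex_convexHull ℝ _

lemma IsPolytope.finite_faces {P : Set (Fin m → ℝ)} (hP : IsPolytope P) :
    {F | IsFaceOf P F}.Finite := by
  obtain ⟨V, hV⟩ := id hP
  refine Set.Finite.of_finite_image (f := Set.extremePoints ℝ)
    (V.finite_toSet.finite_subsets.subset ?_) ?_
  · rintro _ ⟨F, hF, rfl⟩
    refine (hF.isExposed.isExtreme.extremePoints_subset_extremePoints).trans ?_
    rw [hV]
    exact extremePoints_convexHull_subset
  · intro F hF G hG hFG
    rw [← closure_convexHull_extremePoints (IsExposed.isCompact hF.isExposed hP.isCompact)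
      (hF.isExposed.convex hP.convex), ← closure_convexHull_extremePoints
      (IsExposed.isCompact hG.isExposed hP.isCompact) (hG.isExposed.convex hP.convex)]
    exact congrArg (fun X => _root_.closure (convexHull ℝ X)) hFG

/-- Every point of a polytope is a relative interior point of some face. -/
lemma IsPolytope.exists_face_mem_intrinsicInterior {P : Set (Fin m → ℝ)} (hP : IsPolytope P)
    {y : Fin m → ℝ} (hy : y ∈ P) : ∃ F, IsFaceOf P F ∧ y ∈ intrinsicInterior ℝ F := by
  have hfin : {F | IsFaceOf P F ∧ y ∈ F}.Finite := hP.finite_faces.subset fun F hF => hF.1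
  obtain ⟨F, hF⟩ := hfin.exists_minimal ⟨P, ⟨0, by simp [faceV, dotp]⟩, hy⟩
  obtain ⟨⟨hFP, hyF⟩, hmin⟩ := hF
  refine ⟨F, hFP, ?_⟩
  by_contra hyi
  obtain ⟨f, hf, z₀, hz₀, hfz₀⟩ :=
    (hFP.isExposed.convex hP.convex).exists_supporting_of_notMem_intrinsicInterior hyF hyi
  obtain ⟨u, hu⟩ := exists_dotp_eq f
  simp only [hu] at hf hfz₀
  obtain ⟨w, rfl⟩ := hFP
  obtain ⟨V, hV⟩ := id hP
  have hev : ∀ᶠ ε in nhdsWithin (0 : ℝ) (Ioi 0), ∀ p ∈ V,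
      dotp w p + ε * dotp u p ≤ dotp w y + ε * dotp u y := by
    refine (Filter.eventually_all_finset V).2 fun p hp => ?_
    have hpP : p ∈ P := hV ▸ subset_convexHull ℝ _ hp
    rcases (hyF.2 p hpP).lt_or_eq with hlt | heq
    · have hcont : Continuous fun ε : ℝ =>
        (dotp w y + ε * dotp u y) - (dotp w p + ε * dotp u p) := by fun_prop
      have h0 := (isOpen_Ioi (a := (0 : ℝ))).preimage hcont
      filter_upwards [nhdsWithin_le_nhds (h0.mem_nhds (show (0 : ℝ) ∈ _ by simpa using hlt))]
        with ε hε
      have : 0 < (dotp w y + ε * dotp u y) - (dotp w p + ε * dotp u p) := hε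
      linarith
    · filter_upwards [self_mem_nhdsWithin] with ε hε
      have hpF : p ∈ faceV w P := ⟨hpP, fun q hq => heq ▸ hyF.2 q hq⟩
      have := mul_le_mul_of_nonneg_left (hf p hpF) (le_of_lt hε)
      linarith
  obtain ⟨ε, hε, hε0⟩ := (hev.and self_mem_nhdsWithin).exists
  have hε0 : 0 < ε := hε0
  have hle : ∀ z ∈ P, dotp w z + ε * dotp u z ≤ dotp w y + ε * dotp u y := by
    have hsub : P ⊆ {z | dotDual (w + ε • u) z ≤ dotp w y + ε * dotp u y} := by
      rw [hV]
      refine convexHull_min (fun p hp => ?_)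
        (convex_halfSpace_le (dotDual (w + ε • u)).isLinear _)
      change dotp (w + ε • u) p ≤ _
      rw [dotp_add_left, dotp_smul_left]
      exact hε p hp
    intro z hz
    have : dotp (w + ε • u) z ≤ _ := hsub hz
    rwa [dotp_add_left, dotp_smul_left] at this
  have hval : ∀ z, dotp (w + (w + ε • u)) z = dotp w z + (dotp w z + ε * dotp u z) := by
    intro z
    rw [dotp_add_left, dotp_add_left, dotp_smul_left]
  have hyF' : y ∈ faceV (w + (w + ε • u)) P := by
    refine ⟨hy, fun z hz => ?_⟩
    rw [hval, hval]
    exact add_le_add (hyF.2 z hz) (hle z hz)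
  have hsub : faceV (w + (w + ε • u)) P ⊆ faceV w P := by
    rintro z ⟨hzP, hz⟩
    have h1 := hz y hy
    rw [hval, hval] at h1
    have h2 := hle z hzP
    exact ⟨hzP, fun q hq => (hyF.2 q hq).trans (by linarith)⟩
  have hz₀' : z₀ ∈ faceV (w + (w + ε • u)) P := hmin ⟨⟨_, rfl⟩, hyF'⟩ hsub hz₀
  have h1 := hz₀'.2 y hy
  rw [hval, hval] at h1
  have h2 := hyF.2 z₀ hz₀.1
  have h3 := mul_lt_mul_of_pos_left hfz₀ hε0
  linarith

lemma finrank_direction_affineSpan_eq_pdim (K : Set (Fin m → ℝ)) :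
    Module.finrank ℝ (affineSpan ℝ K).direction = pdim K := by
  rw [direction_affineSpan, pdim]

lemma mem_faceV_iff_not_nonempty_inter {v x : Fin m → ℝ} {K : Set (Fin m → ℝ)} :
    x ∈ faceV v K ↔ x ∈ K ∧ ¬ (K ∩ {y | dotp v x < dotp v y}).Nonempty := by
  constructor
  · rintro ⟨hx, h⟩
    exact ⟨hx, fun ⟨y, hy, hlt⟩ => (h y hy).not_gt hlt⟩
  · rintro ⟨hx, h⟩
    exact ⟨hx, fun y hy => not_lt.1 fun hlt => h ⟨y, hy, hlt⟩⟩

/-- If the open set `H` is stable under contraction towards `x ∈ K`, then `H` meets `K` only if it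
meets the relative interior of `K` arbitrarily close to `x`. -/
lemma Convex.nonempty_intrinsicInterior_inter_ball_iff {K H : Set (Fin m → ℝ)} (hK : Convex ℝ K)
    {x : Fin m → ℝ} (hx : x ∈ K) (hH : IsOpen H)
    (hHx : ∀ p ∈ H, ∀ t : ℝ, 0 < t → t ≤ 1 → x + t • (p - x) ∈ H) {δ : ℝ} (hδ : 0 < δ) :
    (intrinsicInterior ℝ K ∩ (Metric.ball x δ ∩ H)).Nonempty ↔ (K ∩ H).Nonempty := by
  constructor
  · rintro ⟨y, hy, -, hyH⟩
    exact ⟨y, intrinsicInterior_subset hy, hyH⟩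
  · rintro ⟨p, hpK, hpH⟩
    obtain ⟨z, hz⟩ := Set.Nonempty.intrinsicInterior hK ⟨x, hx⟩
    have hev1 : ∀ᶠ s in nhdsWithin (0 : ℝ) (Ioi 0), p + s • (z - p) ∈ H :=
      nhdsWithin_le_nhds ((hH.preimage (by fun_prop : Continuous fun s : ℝ =>
        p + s • (z - p))).mem_nhds (by simpa using hpH))
    obtain ⟨s, hsH, hs⟩ := (hev1.and (Ioc_mem_nhdsGT one_pos)).exists
    have hqi := hK.add_smul_sub_mem_intrinsicInterior hz hpK hs.1 hs.2
    set q := p + s • (z - p)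
    have hev2 : ∀ᶠ t in nhdsWithin (0 : ℝ) (Ioi 0), x + t • (q - x) ∈ Metric.ball x δ :=
      nhdsWithin_le_nhds ((Metric.isOpen_ball.preimage (by fun_prop : Continuous fun t : ℝ =>
        x + t • (q - x))).mem_nhds (by simpa using hδ))
    obtain ⟨t, htb, ht⟩ := (hev2.and (Ioc_mem_nhdsGT one_pos)).exists
    exact ⟨x + t • (q - x), hK.add_smul_sub_mem_intrinsicInterior hqi hx ht.1 ht.2, htb,
      hHx q hsH t ht.1 ht.2⟩

lemma isRelOpenConvex_intrinsicInterior_inter {K N : Set (Fin m → ℝ)} (hK : Convex ℝ K)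
    (hN : IsOpen N) (hNc : Convex ℝ N) (hb : Bornology.IsBounded N) :
    IsRelOpenConvex (affineSpan ℝ K) (intrinsicInterior ℝ K ∩ N) := by
  refine ⟨hK.intrinsicInterior.inter hNc, hb.subset inter_subset_right, ?_⟩
  obtain ⟨O, hO, hOK⟩ := exists_isOpen_intrinsicInterior_eq K
  exact ⟨O ∩ N, hO.inter hN, by rw [hOK, inter_assoc]⟩

end Faces

section Subdivision

variable {m : ℕ} {S : Finset (Set (Fin m → ℝ))} {Q : Set (Fin m → ℝ)}

lemma IsSubdivision.finite_faces (hS : IsSubdivision S Q) :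
    {F | IsFaceOfSubdivision S F}.Finite := by
  have : {F | IsFaceOfSubdivision S F} = ⋃ P ∈ S, {F | IsFaceOf P F} := by
    ext F
    simp [IsFaceOfSubdivision]
  rw [this]
  exact S.finite_toSet.biUnion fun P hP => (hS.poly P hP).finite_faces

lemma IsSubdivision.cell_subset (hS : IsSubdivision S Q) {P : Set (Fin m → ℝ)} (hP : P ∈ S) :
    P ⊆ Q :=
  hS.cover ▸ subset_sUnion_of_mem (Finset.mem_coe.2 hP)

lemma IsSubdivision.isClosed (hS : IsSubdivision S Q) : IsClosed Q := by
  rw [← hS.cover, sUnion_eq_biUnion]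
  exact S.finite_toSet.isClosed_biUnion fun P hP => (hS.poly P hP).isCompact.isClosed

lemma IsSubdivision.face_subset (hS : IsSubdivision S Q) {F : Set (Fin m → ℝ)}
    (hF : IsFaceOfSubdivision S F) : F ⊆ Q := by
  obtain ⟨P, hP, hFP⟩ := hF
  exact hFP.subset.trans (hS.cell_subset hP)

lemma IsSubdivision.face_isClosed (hS : IsSubdivision S Q) {F : Set (Fin m → ℝ)}
    (hF : IsFaceOfSubdivision S F) : IsClosed F := by
  obtain ⟨P, hP, hFP⟩ := hF
  exact IsExposed.isClosed hFP.isExposed (hS.poly P hP).isCompact.isClosed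

lemma IsSubdivision.face_convex (hS : IsSubdivision S Q) {F : Set (Fin m → ℝ)}
    (hF : IsFaceOfSubdivision S F) : Convex ℝ F := by
  obtain ⟨P, hP, hFP⟩ := hF
  exact hFP.isExposed.convex (hS.poly P hP).convex

/-- A face of a subdivision that contains a relative interior point of another face contains that
face. -/
lemma IsSubdivision.face_subset_of_mem_intrinsicInterior (hS : IsSubdivision S Q)
    {F G : Set (Fin m → ℝ)} (hF : IsFaceOfSubdivision S F) (hG : IsFaceOfSubdivision S G)
    {y : Fin m → ℝ} (hyF : y ∈ intrinsicInterior ℝ F) (hyG : y ∈ G) : F ⊆ G := by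
  obtain ⟨P, hP, hFP⟩ := hF
  obtain ⟨P', hP', hGP'⟩ := hG
  refine hGP'.isExposed.isExtreme.subset_of_mem_intrinsicInterior ?_ hyF hyG
  by_cases hPP' : P = P'
  · exact hPP' ▸ hFP.subset
  · have hy : y ∈ P ∩ P' := ⟨hFP.subset (intrinsicInterior_subset hyF), hGP'.subset hyG⟩
    exact ((hS.inter_face P hP P' hP' hPP' ⟨y, hy⟩).1.isExposed.isExtreme
      |>.subset_of_mem_intrinsicInterior hFP.subset hyF hy).trans inter_subset_right

lemma IsSubdivision.isInteriorFace_iff (hS : IsSubdivision S Q) {F : Set (Fin m → ℝ)} :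
    IsInteriorFace S Q F ↔
      IsFaceOfSubdivision S F ∧ ∃ z ∈ F, z ∈ intrinsicInterior ℝ Q := by
  refine and_congr_right fun hF => ?_
  rw [← closure_sdiff_intrinsicInterior, hS.isClosed.closure_eq, not_subset]
  refine exists_congr fun z => and_congr_right fun hz => ?_
  simp [hS.face_subset hF hz]

open Classical in
/-- The alternating count of the interior faces through `x` that meet an open convex set `H` stable
under contraction towards `x`. -/
lemma IsSubdivision.sum_interior_faces_meeting (hS : IsSubdivision S Q) (hQ : Convex ℝ Q)
    {I : Finset (Set (Fin m → ℝ))} (hI : ∀ F, F ∈ I ↔ IsInteriorFace S Q F)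
    {x : Fin m → ℝ} (hx : x ∈ Q) {H : Set (Fin m → ℝ)} (hH : IsOpen H) (hHc : Convex ℝ H)
    (hHx : ∀ p ∈ H, ∀ t : ℝ, 0 < t → t ≤ 1 → x + t • (p - x) ∈ H) :
    ∑ F ∈ I with x ∈ F, (if (F ∩ H).Nonempty then (-1 : ℤ) ^ pdim F else 0)
      = if (Q ∩ H).Nonempty then (-1) ^ pdim Q else 0 := by
  obtain ⟨δ, hδ, hball⟩ : ∃ δ > 0, ∀ F ∈ I, (F ∩ Metric.ball x δ).Nonempty → x ∈ F := by
    have hclosed : IsClosed (⋃ F ∈ {F ∈ I | x ∉ F}, F) :=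
      isClosed_biUnion_finset fun F hF =>
        hS.face_isClosed ((hI F).1 (Finset.mem_filter.1 hF).1).1
    obtain ⟨δ, hδ, hsub⟩ := Metric.isOpen_iff.1 hclosed.isOpen_compl x (by simp)
    refine ⟨δ, hδ, fun F hF ⟨y, hyF, hyb⟩ => ?_⟩
    by_contra hxF
    exact hsub hyb (mem_biUnion (Finset.mem_coe.2 (Finset.mem_filter.2 ⟨hF, hxF⟩)) hyF)
  have hN : IsOpen (Metric.ball x δ ∩ H) := Metric.isOpen_ball.inter hH
  have hNc : Convex ℝ (Metric.ball x δ ∩ H) := (convex_ball x δ).inter hHc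
  have hNb : Bornology.IsBounded (Metric.ball x δ ∩ H) :=
    Metric.isBounded_ball.subset inter_subset_left
  have hconv : ∀ F ∈ I, Convex ℝ F := fun F hF => hS.face_convex ((hI F).1 hF).1
  have hmain := sum_neg_one_pow_eq_of_partition {F ∈ I | x ∈ F} (fun F => affineSpan ℝ F)
    (fun F => intrinsicInterior ℝ F ∩ (Metric.ball x δ ∩ H))
    (fun F hF => isRelOpenConvex_intrinsicInterior_inter
      (hconv F (Finset.mem_filter.1 hF).1) hN hNc hNb)
    (isRelOpenConvex_intrinsicInterior_inter hQ hN hNc hNb) ?_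
  · simp only [finrank_direction_affineSpan_eq_pdim] at hmain
    rw [if_congr (hQ.nonempty_intrinsicInterior_inter_ball_iff hx hH hHx hδ) rfl rfl] at hmain
    refine Eq.trans (Finset.sum_congr rfl fun F hF => ?_) hmain
    obtain ⟨hFI, hxF⟩ := Finset.mem_filter.1 hF
    exact if_congr
      ((hconv F hFI).nonempty_intrinsicInterior_inter_ball_iff hxF hH hHx hδ).symm rfl rfl
  · intro y
    have hri : ∀ F ∈ I, intrinsicInterior ℝ F ⊆ intrinsicInterior ℝ Q := by
      intro F hF
      obtain ⟨hFS, z, hzF, hz⟩ := hS.isInteriorFace_iff.1 ((hI F).1 hF)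
      exact hQ.intrinsicInterior_subset_of_mem (hS.face_subset hFS) hzF hz
    by_cases hy : y ∈ intrinsicInterior ℝ Q ∩ (Metric.ball x δ ∩ H)
    · rw [if_pos hy]
      obtain ⟨P, hP, hyP⟩ : ∃ P ∈ S, y ∈ P := by
        have := intrinsicInterior_subset hy.1
        rw [← hS.cover] at this
        simpa using this
      obtain ⟨F, hFP, hyF⟩ := (hS.poly P hP).exists_face_mem_intrinsicInterior hyP
      have hFS : IsFaceOfSubdivision S F := ⟨P, hP, hFP⟩
      have hFI : F ∈ I :=
        (hI F).2 (hS.isInteriorFace_iff.2 ⟨hFS, y, intrinsicInterior_subset hyF, hy.1⟩)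
      have hxF : x ∈ F := hball F hFI ⟨y, intrinsicInterior_subset hyF, hy.2.1⟩
      rw [Finset.sum_eq_single_of_mem F (Finset.mem_filter.2 ⟨hFI, hxF⟩), if_pos ⟨hyF, hy.2⟩]
      intro G hG hGF
      refine if_neg fun hyG => hGF ?_
      have hGS := ((hI G).1 (Finset.mem_filter.1 hG).1).1
      exact Subset.antisymm
        (hS.face_subset_of_mem_intrinsicInterior hGS hFS hyG.1 (intrinsicInterior_subset hyF))
        (hS.face_subset_of_mem_intrinsicInterior hFS hGS hyF (intrinsicInterior_subset hyG.1))
    · rw [if_neg hy]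
      refine Finset.sum_eq_zero fun F hF => if_neg fun hyF => hy ⟨?_, hyF.2⟩
      exact hri F (Finset.mem_filter.1 hF).1 hyF.1

open Classical in
/-- The indicator function of `faceV v Q` is the alternating sum of those of `faceV v F` over the
interior faces `F` of a subdivision of `Q`. -/
lemma IsSubdivision.sum_mem_faceV (hS : IsSubdivision S Q) (hQ : Convex ℝ Q)
    {I : Finset (Set (Fin m → ℝ))} (hI : ∀ F, F ∈ I ↔ IsInteriorFace S Q F)
    (v : Fin m → ℝ) {x : Fin m → ℝ} (hx : x ∈ Q) :
    ∑ F ∈ I, (-1 : ℤ) ^ (pdim Q - pdim F) * (if x ∈ faceV v F then 1 else 0)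
      = if x ∈ faceV v Q then 1 else 0 := by
  have huniv := hS.sum_interior_faces_meeting hQ hI hx isOpen_univ convex_univ
    (fun p _ t _ _ => mem_univ (x + t • (p - x)))
  have hhalf := hS.sum_interior_faces_meeting hQ hI hx (H := {y | dotp v x < dotp v y})
    (isOpen_lt continuous_const (dotDual v).continuous)
    (convex_halfSpace_gt (dotDual v).isLinear _) (by
      intro p hp t ht _
      have hp : dotDual v x < dotDual v p := hp
      change dotDual v x < dotDual v (x + t • (p - x))
      rw [map_add, map_smul, map_sub, smul_eq_mul]
      have := mul_pos ht (sub_pos.2 hp)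
      linarith)
  have hsign : ∀ F ∈ I, (-1 : ℤ) ^ (pdim Q - pdim F) = (-1) ^ pdim Q * (-1) ^ pdim F := by
    intro F hF
    have hle : pdim F ≤ pdim Q :=
      Submodule.finrank_mono (vectorSpan_mono ℝ (hS.face_subset ((hI F).1 hF).1))
    obtain ⟨d, hd⟩ := Nat.exists_eq_add_of_le hle
    rw [hd, Nat.add_sub_cancel_left, pow_add, mul_right_comm, ← pow_add, ← two_mul, pow_mul]
    simp
  have hterm : ∀ K : Set (Fin m → ℝ), x ∈ K → ∀ a : ℤ,
      (if (K ∩ univ).Nonempty then a else 0)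
        - (if (K ∩ {y | dotp v x < dotp v y}).Nonempty then a else 0)
        = a * if x ∈ faceV v K then 1 else 0 := by
    intro K hxK a
    have hne : (K ∩ univ).Nonempty := ⟨x, hxK, mem_univ x⟩
    rw [if_pos hne, mem_faceV_iff_not_nonempty_inter]
    by_cases h : (K ∩ {y | dotp v x < dotp v y}).Nonempty <;> simp [h, hxK]
  have hdiff : ∑ F ∈ I, (-1 : ℤ) ^ pdim F * (if x ∈ faceV v F then 1 else 0)
      = (-1) ^ pdim Q * if x ∈ faceV v Q then 1 else 0 := by
    rw [← hterm Q hx, ← huniv, ← hhalf, ← Finset.sum_sub_distrib, Finset.sum_filter]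
    refine Finset.sum_congr rfl fun F _ => ?_
    by_cases hxF : x ∈ F
    · rw [if_pos hxF, hterm F hxF]
    · rw [if_neg hxF, if_neg fun h => hxF h.1, mul_zero]
  calc ∑ F ∈ I, (-1 : ℤ) ^ (pdim Q - pdim F) * (if x ∈ faceV v F then 1 else 0)
      = (-1) ^ pdim Q * ∑ F ∈ I, (-1 : ℤ) ^ pdim F * (if x ∈ faceV v F then 1 else 0) := by
        rw [Finset.mul_sum]
        refine Finset.sum_congr rfl fun F hF => ?_
        rw [hsign F hF, mul_assoc]
    _ = if x ∈ faceV v Q then 1 else 0 := by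
        rw [hdiff, ← mul_assoc, ← pow_add, ← two_mul, pow_mul]
        simp

end Subdivision

lemma mPoly_nonempty {m : ℕ} (M : Matroid (Fin m)) : (mPoly M).Nonempty := by
  classical
  obtain ⟨B, hB⟩ := M.exists_isBase
  exact ⟨eVec B.toFinset, subset_convexHull ℝ _ ⟨B.toFinset, by simpa using hB, rfl⟩⟩

open Classical in
/-- Let `S` be a matroid polytope subdivision of a matroid polytope
`Q ⊆ ℝ^{n+1}`, let `v ≠ 0` and let `F₀` be a face of `S`.  Then
`∑_F (-1)^{dim Q - dim F} · j(F)`, summed over the interior faces `F` of `S`, where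
`j(F) = 1` if `face_v(F) ⊇ F₀` and `0` otherwise, equals `1` if `F₀ ⊆ face_v(Q)` and `0`
otherwise. -/
theorem interior_face_cancellation {n : ℕ} (M : Matroid (Fin (n + 1)))
    (Q : Set (Fin (n + 1) → ℝ)) (hQ : Q = mPoly M)
    (S : Finset (Set (Fin (n + 1) → ℝ))) (hS : IsMatroidSubdivision S Q)
    (v : Fin (n + 1) → ℝ) (hv : v ≠ 0)
    (F₀ : Set (Fin (n + 1) → ℝ)) (hF₀ : IsFaceOfSubdivision S F₀) :
    (∑ᶠ F ∈ {F | IsInteriorFace S Q F},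
        (-1 : ℤ) ^ (pdim Q - pdim F) * (if F₀ ⊆ faceV v F then 1 else 0))
      = if F₀ ⊆ faceV v Q then 1 else 0 := by
  have hsub := hS.1
  have hconv : Convex ℝ Q := hQ ▸ convex_convexHull ℝ _
  have hne : F₀.Nonempty := by
    obtain ⟨P, hP, w, rfl⟩ := hF₀
    obtain ⟨M', hM'⟩ := hS.2 P hP
    obtain ⟨x, hx, hmax⟩ := (hsub.poly P hP).isCompact.exists_isMaxOn (hM' ▸ mPoly_nonempty M')
      (dotDual w).continuous.continuousOn
    exact ⟨x, hx, fun y hy => hmax hy⟩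
  obtain ⟨x, hx⟩ := Set.Nonempty.intrinsicInterior (hsub.face_convex hF₀) hne
  have hxF₀ : x ∈ F₀ := intrinsicInterior_subset hx
  have hface : ∀ K, F₀ ⊆ K → (F₀ ⊆ faceV v K ↔ x ∈ faceV v K) := fun K hK =>
    ⟨fun h => h hxF₀, fun h =>
      (isExposed_faceV v K).isExtreme.subset_of_mem_intrinsicInterior hK hx h⟩
  have hfin : {F | IsInteriorFace S Q F}.Finite := hsub.finite_faces.subset fun F hF => hF.1
  have hI : ∀ F, F ∈ hfin.toFinset ↔ IsInteriorFace S Q F := fun F => hfin.mem_toFinset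
  rw [finsum_mem_eq_finite_toFinset_sum _ hfin]
  simp only [hface Q (hsub.face_subset hF₀)]
  rw [← hsub.sum_mem_faceV hconv hI v (hsub.face_subset hF₀ hxF₀)]
  refine Finset.sum_congr rfl fun F hF => ?_
  have hiff : F₀ ⊆ faceV v F ↔ x ∈ faceV v F :=
    ⟨fun h => h hxF₀, fun h => (hface F (hsub.face_subset_of_mem_intrinsicInterior hF₀
      ((hI F).1 hF).1 hx h.1)).2 h⟩
  simp only [hiff]
end

section
/- Let 0 ≤ k ≤ d < n and let M = U_{d+1,n+1} be the uniform matroid of rank d+1 on E = {0,…,n}. For every chain of flats ∅ = F_0 ⊊ F_1 ⊊ ⋯ ⊊ F_k ⊊ F_{k+1} = E of M, the product ∏_{i=0}^{k} β(M|F_{i+1}/F_i) equals 0 unless |F_i| = i for all 0 ≤ i ≤ k, in which case it equals the binomial coefficient C(n−k−1, d−k). (Consequently, as a tropical cycle, csm_k(U_{d+1,n+1}) is the Bergman fan of U_{k+1,n+1} with all top-dimensional weights equal to (−1)^{d−k}·C(n−k−1,d−k).) -/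
open Matroid Set

/-- The uniform matroid of rank `r` on the ground set `Fin m`: the independent sets are
the sets of cardinality at most `r`. -/
noncomputable def unifM (m r : ℕ) : Matroid (Fin m) :=
  (IndepMatroid.ofFinite (E := (Set.univ : Set (Fin m))) (Set.toFinite _)
    (fun I => I.ncard ≤ r)
    (by simp)
    (fun I J hJ hIJ => le_trans (Set.ncard_le_ncard hIJ (Set.toFinite _)) hJ)
    (fun I J hI hJ hlt => by
      obtain ⟨e, heJ, heI⟩ : ∃ e ∈ J, e ∉ I := by
        by_contra h
        push_neg at h
        exact absurd (Set.ncard_le_ncard h (Set.toFinite _)) (not_le.mpr hlt)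
      refine ⟨e, heJ, heI, ?_⟩
      show (insert e I).ncard ≤ r
      rw [Set.ncard_insert_of_notMem heI (Set.toFinite _)]
      exact le_trans (Nat.succ_le_of_lt hlt) hJ)
    (fun I _ => Set.subset_univ _)).matroid

open Classical in
/-- The characteristic polynomial `χ_M(λ) = ∑_{F ∈ L(M)} μ(∅,F) λ^{r(M)-r(F)}` of a
loopless matroid `M`; it is `0` if `M` has a loop. -/
noncomputable def charPoly {m : ℕ} (M : Matroid (Fin m)) : Polynomial ℤ :=
  if mLoopless M then
    ∑ F ∈ flatsF M, Polynomial.C (mob (flatsF M) ∅ F) * Polynomial.X ^ (rk M M.E - rk M ↑F)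
  else 0

/-- The reduced characteristic polynomial `χ̄_M(λ) = χ_M(λ)/(λ-1)`, computed as the
quotient upon division by the monic polynomial `λ - 1`. -/
noncomputable def redCharPoly {m : ℕ} (M : Matroid (Fin m)) : Polynomial ℤ :=
  charPoly M /ₘ (Polynomial.X - Polynomial.C 1)

/-- `N` is the uniform matroid of rank `min r |S|` on the ground set `S`. -/
def IsUniformOn {m : ℕ} (N : Matroid (Fin m)) (S : Finset (Fin m)) (r : ℕ) : Prop :=
  N.E = ↑S ∧ ∀ I : Finset (Fin m), N.Indep ↑I ↔ I ⊆ S ∧ I.card ≤ r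

theorem isUniformOn_unifM (m r : ℕ) : IsUniformOn (unifM m r) Finset.univ r := by
  refine ⟨by simp [unifM], fun I => ?_⟩
  simp [unifM, Set.ncard_coe_finset]

namespace IsUniformOn

variable {m r : ℕ} {N : Matroid (Fin m)} {S : Finset (Fin m)}

theorem of_rank_iff {r' : ℕ} (h : IsUniformOn N S r)
    (hr : ∀ I ⊆ S, I.card ≤ r ↔ I.card ≤ r') : IsUniformOn N S r' :=
  ⟨h.1, fun I => (h.2 I).trans (and_congr_right (hr I))⟩

theorem mMinor (h : IsUniformOn N S r) {F G : Finset (Fin m)} (hFG : F ⊆ G) (hG : G ⊆ S)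
    (hF : F.card ≤ r) : IsUniformOn (mMinor N ↑G ↑F) (G \ F) (r - F.card) := by
  have hFi : (N ↾ (G : Set (Fin m))).Indep ↑F :=
    Matroid.restrict_indep_iff.2 ⟨(h.2 F).2 ⟨hFG.trans hG, hF⟩, by exact_mod_cast hFG⟩
  have hc : _root_.mMinor N ↑G ↑F = (N ↾ (G : Set (Fin m))) ／ (F : Set (Fin m)) := rfl
  refine ⟨by simp [hc], fun I => ?_⟩
  rw [hc, hFi.contract_indep_iff, Matroid.restrict_indep_iff, ← Finset.coe_union, h.2,
    Finset.disjoint_coe, Finset.coe_subset, Finset.subset_sdiff]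
  constructor
  · rintro ⟨hd, ⟨-, hcard⟩, hsub⟩
    rw [Finset.card_union_of_disjoint hd] at hcard
    exact ⟨⟨Finset.subset_union_left.trans hsub, hd⟩, by omega⟩
  · rintro ⟨⟨hsub, hd⟩, hcard⟩
    have hu := Finset.union_subset hsub hFG
    exact ⟨hd, ⟨hu.trans hG, by rw [Finset.card_union_of_disjoint hd]; omega⟩, hu⟩

theorem isFlat_iff (h : IsUniformOn N S r) (hr : r ≤ S.card) (F : Finset (Fin m)) :
    N.IsFlat ↑F ↔ F ⊆ S ∧ (F.card < r ∨ F = S) := by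
  constructor
  · intro hF
    have hFS : F ⊆ S := by simpa [h.1] using hF.subset_ground
    refine ⟨hFS, or_iff_not_imp_left.2 fun hcard => hFS.antisymm ?_⟩
    obtain ⟨I, hIF, hIr⟩ := Finset.exists_subset_card_eq (not_lt.1 hcard)
    have hbasis : ∀ X : Finset (Fin m), I ⊆ X → X ⊆ S → N.IsBasis ↑I ↑X := by
      intro X hIX hXS
      rw [Matroid.isBasis_iff (by rw [h.1]; exact_mod_cast hXS)]
      refine ⟨(h.2 I).2 ⟨hIX.trans hXS, hIr.le⟩, by exact_mod_cast hIX, fun J hJ hIJ _ => ?_⟩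
      obtain ⟨J, rfl⟩ := J.toFinite.exists_finset_coe
      rw [Finset.coe_inj]
      exact Finset.eq_of_subset_of_card_le (by exact_mod_cast hIJ) (((h.2 J).1 hJ).2.trans hIr.ge)
    exact_mod_cast hF.subset_of_isBasis_of_isBasis (hbasis F hIF hFS)
      (hbasis S (hIF.trans hFS) subset_rfl)
  · rintro ⟨hFS, hcard | rfl⟩
    · refine ⟨fun I X hI hX e heX => ?_, by rw [h.1]; exact_mod_cast hFS⟩
      obtain rfl := ((h.2 F).2 ⟨hFS, hcard.le⟩).eq_of_isBasis hI
      by_contra heF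
      have heS : e ∈ S := by simpa [h.1] using hX.subset_ground heX
      have hins : N.Indep ↑(insert e F) :=
        (h.2 _).2 ⟨Finset.insert_subset heS hFS, (Finset.card_insert_le e F).trans hcard⟩
      rw [Finset.coe_insert] at hins
      have heq := hX.eq_of_subset_indep hins (Set.subset_insert _ _)
        (Set.insert_subset heX hX.subset)
      exact heF (heq ▸ Set.mem_insert _ _)
    · rw [← h.1]
      exact N.ground_isFlat

theorem rk_eq (h : IsUniformOn N S r) {X : Finset (Fin m)} (hX : X ⊆ S) :
    rk N ↑X = min X.card r := by
  refine IsGreatest.csSup_eq ⟨?_, ?_⟩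
  · obtain ⟨I, hIX, hI⟩ := Finset.exists_subset_card_eq (min_le_left X.card r)
    exact ⟨I, ⟨(h.2 I).2 ⟨hIX.trans hX, hI.trans_le (min_le_right _ _)⟩, by exact_mod_cast hIX⟩,
      by rw [Set.ncard_coe_finset, hI]⟩
  · rintro _ ⟨I, ⟨hI, hIX⟩, rfl⟩
    obtain ⟨I, rfl⟩ := I.toFinite.exists_finset_coe
    rw [Set.ncard_coe_finset]
    exact le_min (Finset.card_le_card (by exact_mod_cast hIX)) ((h.2 I).1 hI).2

theorem mLoopless (h : IsUniformOn N S r) (hr : 1 ≤ r) : mLoopless N := by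
  rintro e ⟨heE, he⟩
  have hind : N.Indep ↑({e} : Finset (Fin m)) :=
    (h.2 _).2 ⟨by simpa [h.1] using heE, by simpa using hr⟩
  obtain ⟨B, hB, heB⟩ := hind.exists_isBase_superset
  exact he B hB (heB (by simp))

theorem mem_flatsF (h : IsUniformOn N S r) (hr : r ≤ S.card) (F : Finset (Fin m)) :
    F ∈ flatsF N ↔ F ⊆ S ∧ (F.card < r ∨ F = S) := by
  simp [flatsF, h.isFlat_iff hr]

end IsUniformOn

theorem mob_empty {α : Type*} [DecidableEq α] (flats : Finset (Finset α)) {G : Finset α}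
    (hG : G.Nonempty) : mob flats ∅ G = -∑ G' ∈ flats with G' ⊂ G, mob flats ∅ G' := by
  rw [mob, if_pos (Finset.empty_subset G), if_neg hG.ne_empty.symm,
    Finset.sum_attach _ (fun G' => mob flats ∅ G')]
  simp

theorem mob_empty_eq_neg_one_pow {α : Type*} [DecidableEq α] (flats : Finset (Finset α))
    (G : Finset α) (hflats : ∀ F ⊆ G, F ∈ flats) : mob flats ∅ G = (-1) ^ G.card := by
  induction G using Finset.strongInduction with
  | H G ih =>
    obtain rfl | hG := G.eq_empty_or_nonempty
    · rw [mob]; simp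
    have hfilter : (flats.filter fun G' => G' ⊂ G) = G.ssubsets := by
      ext F
      simp only [Finset.mem_filter, Finset.mem_ssubsets, and_iff_right_iff_imp]
      exact fun hF => hflats F hF.subset
    have hsum : ∑ F ∈ G.ssubsets, mob flats ∅ F = ∑ F ∈ G.ssubsets, (-1) ^ F.card :=
      Finset.sum_congr rfl fun F hF => by
        rw [Finset.mem_ssubsets] at hF
        exact ih F hF fun F' hF' => hflats F' (hF'.trans hF.subset)
    have halt := Finset.sum_powerset_neg_one_pow_card_of_nonempty hG
    rw [← Finset.insert_erase (Finset.mem_powerset_self G),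
      Finset.sum_insert (Finset.notMem_erase _ _)] at halt
    rw [mob_empty flats hG, hfilter, hsum]
    exact neg_eq_of_add_eq_zero_left halt

/-- Summing a function of the cardinality over the subsets of `S` with fewer than `r` elements. -/
theorem sum_powerset_card_lt {α : Type*} (S : Finset α) (r : ℕ) (hr : r ≤ S.card) (f : ℕ → ℤ) :
    ∑ F ∈ S.powerset with F.card < r, f F.card = ∑ j ∈ Finset.range r, (S.card.choose j) * f j := by
  rw [Finset.sum_filter, Finset.sum_powerset_apply_card (fun j => if j < r then f j else 0)]
  simp only [nsmul_eq_mul, mul_ite, mul_zero]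
  rw [← Finset.sum_filter]
  refine Finset.sum_congr ?_ fun _ _ => rfl
  ext j
  simp only [Finset.mem_filter, Finset.mem_range]
  omega

theorem sum_range_choose_mul_sub (t r : ℕ) :
    ∑ j ∈ Finset.range (r + 1), ((t + 2).choose j : ℤ) * ((-1) ^ j * ((j : ℤ) - (r + 1))) =
      (-1) ^ (r + 1) * (t.choose r : ℤ) := by
  induction r with
  | zero => simp
  | succ r ih =>
    have halt := Int.alternating_sum_range_choose_eq_choose (n := t + 1) (m := r + 1)
    have hsplit : ∑ j ∈ Finset.range (r + 1 + 1),
        ((t + 2).choose j : ℤ) * ((-1) ^ j * ((j : ℤ) - ((r + 1 : ℕ) + 1))) =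
        ∑ j ∈ Finset.range (r + 1 + 1),
          ((t + 2).choose j : ℤ) * ((-1) ^ j * ((j : ℤ) - (r + 1))) -
        ∑ j ∈ Finset.range (r + 1 + 1), ((-1) ^ j * ((t + 2).choose j : ℤ)) := by
      rw [← Finset.sum_sub_distrib]
      refine Finset.sum_congr rfl fun j _ => ?_
      push_cast
      ring
    rw [hsplit, halt, Finset.sum_range_succ, ih, Nat.choose_succ_succ t r]
    push_cast
    ring

namespace IsUniformOn

variable {m r : ℕ} {N : Matroid (Fin m)} {S : Finset (Fin m)}

theorem betaInv_eq_sum (h : IsUniformOn N S r) (hr1 : 1 ≤ r) (hr : r ≤ S.card) :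
    betaInv N = (-1) ^ r *
      ∑ j ∈ Finset.range r, (S.card.choose j : ℤ) * ((-1) ^ j * ((j : ℤ) - r)) := by
  have hS : S.Nonempty := Finset.card_pos.1 (by omega)
  have hproper : (flatsF N).filter (fun F => F ⊂ S) = S.powerset.filter fun F => F.card < r := by
    ext F
    simp only [Finset.mem_filter, Finset.mem_powerset, h.mem_flatsF hr]
    constructor
    · rintro ⟨⟨hF, hc | rfl⟩, hss⟩
      · exact ⟨hF, hc⟩
      · exact absurd hss (ssubset_irrefl _)
    · rintro ⟨hF, hc⟩
      exact ⟨⟨hF, Or.inl hc⟩, hF.ssubset_of_ne fun he => by subst he; omega⟩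
  have hflats : flatsF N = insert S (S.powerset.filter fun F => F.card < r) := by
    ext F
    simp only [Finset.mem_insert, Finset.mem_filter, Finset.mem_powerset, h.mem_flatsF hr]
    constructor
    · rintro ⟨hF, hc | rfl⟩
      · exact Or.inr ⟨hF, hc⟩
      · exact Or.inl rfl
    · rintro (rfl | ⟨hF, hc⟩)
      · exact ⟨subset_rfl, Or.inr rfl⟩
      · exact ⟨hF, Or.inl hc⟩
  have hmob : ∀ F ∈ S.powerset.filter (fun F => F.card < r),
      mob (flatsF N) ∅ F = (-1) ^ F.card := by
    intro F hF
    rw [Finset.mem_filter, Finset.mem_powerset] at hF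
    refine mob_empty_eq_neg_one_pow _ F fun F' hF' => (h.mem_flatsF hr F').2 ?_
    exact ⟨hF'.trans hF.1, Or.inl ((Finset.card_le_card hF').trans_lt hF.2)⟩
  have hsum : ∑ F ∈ flatsF N, mob (flatsF N) ∅ F * (rk N ↑F : ℤ) =
      ∑ F ∈ S.powerset with F.card < r, (-1) ^ F.card * ((F.card : ℤ) - r) := by
    nth_rewrite 1 [hflats]
    rw [Finset.sum_insert (by simp [hr]), mob_empty _ hS, hproper, h.rk_eq subset_rfl,
      min_eq_right hr, neg_mul, Finset.sum_mul, neg_add_eq_sub, ← Finset.sum_sub_distrib]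
    refine Finset.sum_congr rfl fun F hF => ?_
    rw [hmob F hF]
    rw [Finset.mem_filter, Finset.mem_powerset] at hF
    rw [h.rk_eq hF.1, min_eq_left hF.2.le]
    ring
  rw [betaInv, if_pos (h.mLoopless hr1), h.1, h.rk_eq subset_rfl, min_eq_right hr, hsum,
    sum_powerset_card_lt S r hr (fun j => (-1) ^ j * ((j : ℤ) - r))]

theorem betaInv_eq_one (h : IsUniformOn N S 1) (hS : S.card = 1) : betaInv N = 1 := by
  rw [h.betaInv_eq_sum le_rfl hS.ge]
  simp

theorem betaInv_eq_choose (h : IsUniformOn N S r) (hr1 : 1 ≤ r) (hr : r ≤ S.card)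
    (hS : 2 ≤ S.card) : betaInv N = ((S.card - 2).choose (r - 1) : ℤ) := by
  obtain ⟨q, rfl⟩ := Nat.exists_eq_add_of_le' hr1
  obtain ⟨t, ht⟩ := Nat.exists_eq_add_of_le' hS
  rw [h.betaInv_eq_sum hr1 hr, ht]
  push_cast
  rw [sum_range_choose_mul_sub, ← mul_assoc, ← mul_pow]
  simp

end IsUniformOn

/-- Let `0 ≤ k ≤ d < n` and `M = U_{d+1,n+1}`.  For every chain of
flats `∅ = F₀ ⊊ F₁ ⊊ ⋯ ⊊ F_k ⊊ F_{k+1} = E` of `M`, the product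
`∏_{i=0}^{k} β(M|F_{i+1}/F_i)` is `0` unless `|F_i| = i` for all `0 ≤ i ≤ k`, in which
case it equals `C(n-k-1, d-k)`. -/
theorem beta_prod_unif {n d k : ℕ} (hkd : k ≤ d) (hdn : d < n)
    (Fc : Fin (k + 2) → Finset (Fin (n + 1)))
    (hmono : StrictMono Fc) (h0 : Fc 0 = ∅)
    (hlast : Fc (Fin.last (k + 1)) = Finset.univ)
    (hflat : ∀ j, (unifM (n + 1) (d + 1)).IsFlat ↑(Fc j)) :
    (¬ (∀ i : Fin (k + 1), (Fc i.castSucc).card = (i : ℕ)) →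
        (∏ i : Fin (k + 1),
          betaInv (mMinor (unifM (n + 1) (d + 1)) ↑(Fc i.succ) ↑(Fc i.castSucc))) = 0) ∧
      ((∀ i : Fin (k + 1), (Fc i.castSucc).card = (i : ℕ)) →
        (∏ i : Fin (k + 1),
          betaInv (mMinor (unifM (n + 1) (d + 1)) ↑(Fc i.succ) ↑(Fc i.castSucc))) =
          ((n - k - 1).choose (d - k) : ℤ)) := by
  have hU := isUniformOn_unifM (n + 1) (d + 1)
  have hcard : ∀ j : Fin (k + 2), j < Fin.last (k + 1) → (Fc j).card ≤ d := by
    intro j hj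
    obtain ⟨-, hlt | heq⟩ := (hU.isFlat_iff (by simp; omega) (Fc j)).1 (hflat j)
    · omega
    · exact absurd (hmono hj) (by rw [heq, hlast]; exact ssubset_irrefl _)
  have hsub : ∀ i : Fin (k + 1), Fc i.castSucc ⊂ Fc i.succ := fun i => hmono i.castSucc_lt_succ
  have hminor : ∀ i : Fin (k + 1), IsUniformOn
      (mMinor (unifM (n + 1) (d + 1)) ↑(Fc i.succ) ↑(Fc i.castSucc))
      (Fc i.succ \ Fc i.castSucc) (d + 1 - (Fc i.castSucc).card) := fun i =>
    hU.mMinor (hsub i).subset (Finset.subset_univ _)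
      ((hcard _ i.castSucc_lt_last).trans (Nat.le_succ d))
  have hfree : ∀ i : Fin k, IsUniformOn
      (mMinor (unifM (n + 1) (d + 1)) ↑(Fc i.castSucc.succ) ↑(Fc i.castSucc.castSucc))
      (Fc i.castSucc.succ \ Fc i.castSucc.castSucc)
      (Fc i.castSucc.succ \ Fc i.castSucc.castSucc).card := by
    intro i
    refine (hminor i.castSucc).of_rank_iff fun I hI => ?_
    have hI := Finset.card_le_card hI
    have hd := hcard i.castSucc.succ (by rw [Fin.lt_def]; simp)
    have hs := Finset.card_sdiff_of_subset (hsub i.castSucc).subset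
    omega
  constructor
  · intro hne
    obtain ⟨i, hi⟩ : ∃ i : Fin k,
        2 ≤ (Fc i.castSucc.succ \ Fc i.castSucc.castSucc).card := by
      by_contra! hall
      refine hne fun i => ?_
      induction i using Fin.induction with
      | zero => simp [h0]
      | succ i ih =>
        have hs := Finset.card_sdiff_of_subset (hsub i.castSucc).subset
        have hlt := Finset.card_lt_card (hsub i.castSucc)
        have := hall i
        rw [← Fin.succ_castSucc, Fin.val_succ]
        simp only [Fin.val_castSucc] at ih
        omega
    refine Finset.prod_eq_zero (Finset.mem_univ i.castSucc) ?_
    rw [(hfree i).betaInv_eq_choose (by omega) le_rfl hi, Nat.choose_eq_zero_of_lt (by omega)]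
    rfl
  · intro heq
    rw [Fin.prod_univ_castSucc, Finset.prod_eq_one, one_mul]
    · have hlastcard := heq (Fin.last k)
      have hs : (Fc (Fin.last k).succ \ Fc (Fin.last k).castSucc).card = n + 1 - k := by
        rw [Finset.card_sdiff_of_subset (hsub _).subset, hlastcard, Fin.succ_last, hlast]
        simp
      rw [Fin.val_last] at hlastcard
      rw [(hminor (Fin.last k)).betaInv_eq_choose (by omega) (by omega) (by omega), hs, hlastcard]
      congr 2 <;> omega
    · intro i _
      have hs : (Fc i.castSucc.succ \ Fc i.castSucc.castSucc).card = 1 := by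
        have h1 := heq i.castSucc
        have h2 := heq i.succ
        rw [← Fin.succ_castSucc] at h2
        rw [Finset.card_sdiff_of_subset (hsub _).subset, h1, h2]
        simp
      exact (hs ▸ hfree i).betaInv_eq_one hs
end
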